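/- arXiv:1905.07551 — 2 statements merged into one kernel-verified Lean document; each statement's English description precedes it below -/
import Mathlib

section
/- Let (]a_i,b_i[)_{i∈I} be a family of nonempty, pairwise disjoint open subintervals of [0,1], (N_i)_{i∈I} a family of functions from [0,1] to [0,1], and N_I the function obtained by the ordinal-sum formula from these data. Then every N_i (i ∈ I) is a fuzzy negation if and only if N_I is a fuzzy negation such that N_I(a_i) = 1−a_i and N_I(b_i) = 1−b_i for each i ∈ I. -/
open Set

/-- A fuzzy negation: a function `N : [0,1] → [0,1]` (here modeled on `ℝ`)
with `N 0 = 1`, `N 1 = 0` and `N` decreasing on `[0,1]`. -/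
def FuzzyNegation (N : ℝ → ℝ) : Prop :=
  (∀ x ∈ Icc (0:ℝ) 1, N x ∈ Icc (0:ℝ) 1) ∧
  N 0 = 1 ∧ N 1 = 0 ∧
  (∀ x ∈ Icc (0:ℝ) 1, ∀ y ∈ Icc (0:ℝ) 1, x ≤ y → N y ≤ N x)

/-- `(]a i, b i[)_{i ∈ I}` is a family of nonempty, pairwise disjoint open
subintervals of `[0,1]`. -/
def GoodFamily {I : Type*} (a b : I → ℝ) : Prop :=
  (∀ i, 0 ≤ a i ∧ a i < b i ∧ b i ≤ 1) ∧
  (∀ i j, i ≠ j → Disjoint (Ioo (a i) (b i)) (Ioo (a j) (b j)))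

/-- `NI` is the ordinal sum of the summands `(a i, b i, N i)_{i ∈ I}`:
`NI x = (1 - b i) + (b i - a i) * N i ((x - a i)/(b i - a i))` whenever
`x ∈ [a i, b i]`, and `NI x = 1 - x` otherwise. -/
def IsOrdinalSum {I : Type*} (a b : I → ℝ) (N : I → ℝ → ℝ) (NI : ℝ → ℝ) : Prop :=
  ∀ x ∈ Icc (0:ℝ) 1,
    (∀ i, x ∈ Icc (a i) (b i) →
      NI x = (1 - b i) + (b i - a i) * N i ((x - a i) / (b i - a i))) ∧
    ((∀ i, x ∉ Icc (a i) (b i)) → NI x = 1 - x)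

/-!
Rescaling turns "`N i` is a fuzzy negation" into a condition on the ordinal sum alone: it is
antitone on `[a i, b i]` and meets `1 - x` at both end points. So everything reduces to gluing: a
function that is antitone on each of a family of intervals, and agrees with a fixed antitone
function at their end points and off their union, is antitone, because whenever `x ≤ y` do not lie
in a common interval, some point of agreement `p` satisfies `x ≤ p ≤ y`.
-/

section Gluing

variable {α β I : Type*} [LinearOrder α] [Preorder β] {f g : α → β} {s : Set α} {a b : I → α}

lemma antitoneOn_of_antitoneOn_Icc_of_eq_off (hg : AntitoneOn g s)
    (hs : ∀ i, a i ∈ s ∧ b i ∈ s) (hf : ∀ i, AntitoneOn f (Icc (a i) (b i)))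
    (hend : ∀ i, f (a i) = g (a i) ∧ f (b i) = g (b i))
    (hoff : ∀ x ∈ s, (∀ i, x ∉ Icc (a i) (b i)) → f x = g x) : AntitoneOn f s := by
  have le_of_agree {p y : α} (hp : p ∈ s) (hfg : f p = g p) (hy : y ∈ s) (hpy : p ≤ y) :
      f y ≤ f p := by
    by_cases hyj : ∃ j, y ∈ Icc (a j) (b j)
    · obtain ⟨j, hyj⟩ := hyj
      have haj : a j ∈ Icc (a j) (b j) := left_mem_Icc.2 (hyj.1.trans hyj.2)
      rcases le_total (a j) p with hjp | hpj
      · exact hf j ⟨hjp, hpy.trans hyj.2⟩ hyj hpy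
      · calc
          f y ≤ f (a j) := hf j haj hyj hyj.1
          _ = g (a j) := (hend j).1
          _ ≤ g p := hg hp (hs j).1 hpj
          _ = f p := hfg.symm
    · rw [hoff y hy (not_exists.1 hyj), hfg]
      exact hg hp hy hpy
  intro x hx y hy hxy
  by_cases hxi : ∃ i, x ∈ Icc (a i) (b i)
  · obtain ⟨i, hxi⟩ := hxi
    have hbi : b i ∈ Icc (a i) (b i) := right_mem_Icc.2 (hxi.1.trans hxi.2)
    rcases le_total y (b i) with hyb | hby
    · exact hf i hxi ⟨hxi.1.trans hxy, hyb⟩ hxy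
    · exact (le_of_agree (hs i).2 (hend i).2 hy hby).trans (hf i hxi hbi hxi.2)
  · exact le_of_agree hx (hoff x hx (not_exists.1 hxi)) hy hxy

end Gluing

lemma antitoneOn_Icc_rescale_iff {𝕜 : Type*} [Field 𝕜] [LinearOrder 𝕜] [IsStrictOrderedRing 𝕜]
    {f F : 𝕜 → 𝕜} {a b c k : 𝕜} (hab : a < b) (hk : 0 < k)
    (hF : ∀ x ∈ Icc a b, F x = c + k * f ((x - a) / (b - a))) :
    AntitoneOn F (Icc a b) ↔ AntitoneOn f (Icc 0 1) := by
  have hd : 0 < b - a := sub_pos.2 hab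
  constructor
  · intro h s hs t ht hst
    have mem_Icc {u : 𝕜} (hu : u ∈ Icc (0 : 𝕜) 1) : a + (b - a) * u ∈ Icc a b :=
      ⟨le_add_of_nonneg_right (mul_nonneg hd.le hu.1),
        le_sub_iff_add_le'.1 (mul_le_of_le_one_right hd.le hu.2)⟩
    have apply_affine {u : 𝕜} (hu : u ∈ Icc (0 : 𝕜) 1) :
        F (a + (b - a) * u) = c + k * f u := by
      rw [hF _ (mem_Icc hu), add_sub_cancel_left, mul_div_cancel_left₀ _ hd.ne']
    have hF_le := h (mem_Icc hs) (mem_Icc ht) (by gcongr)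
    rw [apply_affine hs, apply_affine ht] at hF_le
    exact le_of_mul_le_mul_left (le_of_add_le_add_left hF_le) hk
  · intro h x hx y hy hxy
    have rescale_mem {z : 𝕜} (hz : z ∈ Icc a b) : (z - a) / (b - a) ∈ Icc (0 : 𝕜) 1 :=
      ⟨div_nonneg (sub_nonneg.2 hz.1) hd.le, (div_le_one hd).2 (sub_le_sub_right hz.2 a)⟩
    have hf_le := h (rescale_mem hx) (rescale_mem hy) (by gcongr)
    rw [hF x hx, hF y hy]
    gcongr

lemma fuzzyNegation_iff_antitoneOn {N : ℝ → ℝ} :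
    FuzzyNegation N ↔ AntitoneOn N (Icc 0 1) ∧ N 0 = 1 ∧ N 1 = 0 := by
  constructor
  · rintro ⟨-, h0, h1, hanti⟩
    exact ⟨fun x hx y hy hxy => hanti x hx y hy hxy, h0, h1⟩
  · rintro ⟨hanti, h0, h1⟩
    have hmaps := hanti.mapsTo_Icc
    rw [h0, h1] at hmaps
    exact ⟨hmaps, h0, h1, fun x hx y hy hxy => hanti hx hy hxy⟩

namespace IsOrdinalSum

variable {I : Type*} {a b : I → ℝ} {N : I → ℝ → ℝ} {NI : ℝ → ℝ}

lemma fuzzyNegation_summand_iff (hNI : IsOrdinalSum a b N NI) {i : I}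
    (hi : 0 ≤ a i ∧ a i < b i ∧ b i ≤ 1) :
    FuzzyNegation (N i) ↔
      AntitoneOn NI (Icc (a i) (b i)) ∧ NI (a i) = 1 - a i ∧ NI (b i) = 1 - b i := by
  obtain ⟨h0, hab, h1⟩ := hi
  have hd : b i - a i ≠ 0 := (sub_pos.2 hab).ne'
  have hF (x : ℝ) (hx : x ∈ Icc (a i) (b i)) :
      NI x = (1 - b i) + (b i - a i) * N i ((x - a i) / (b i - a i)) :=
    (hNI x ⟨h0.trans hx.1, hx.2.trans h1⟩).1 i hx
  have left_iff : NI (a i) = 1 - a i ↔ N i 0 = 1 := by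
    rw [hF _ (left_mem_Icc.2 hab.le), sub_self, zero_div, ← sub_add_sub_cancel 1 (b i) (a i),
      add_right_inj, mul_eq_left₀ hd]
  have right_iff : NI (b i) = 1 - b i ↔ N i 1 = 0 := by
    rw [hF _ (right_mem_Icc.2 hab.le), div_self hd, add_eq_left, mul_eq_zero_iff_left hd]
  rw [fuzzyNegation_iff_antitoneOn, left_iff, right_iff,
    antitoneOn_Icc_rescale_iff hab (sub_pos.2 hab) hF]

lemma eq_one_sub_of_forall_mem_Icc (hNI : IsOrdinalSum a b N NI) {x : ℝ} (hx : x ∈ Icc 0 1)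
    (h : ∀ i, x ∈ Icc (a i) (b i) → NI x = 1 - x) : NI x = 1 - x := by
  by_cases hxi : ∃ i, x ∈ Icc (a i) (b i)
  · exact hxi.elim h
  · exact (hNI x hx).2 (not_exists.1 hxi)

lemma fuzzyNegation_of_antitoneOn_Icc (hNI : IsOrdinalSum a b N NI)
    (hunit : ∀ i, a i ∈ Icc 0 1 ∧ b i ∈ Icc 0 1) (hanti : ∀ i, AntitoneOn NI (Icc (a i) (b i)))
    (hend : ∀ i, NI (a i) = 1 - a i ∧ NI (b i) = 1 - b i) : FuzzyNegation NI := by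
  have h0 : NI 0 = 1 - 0 :=
    hNI.eq_one_sub_of_forall_mem_Icc (left_mem_Icc.2 zero_le_one) fun i hi =>
      le_antisymm hi.1 (hunit i).1.1 ▸ (hend i).1
  have h1 : NI 1 = 1 - 1 :=
    hNI.eq_one_sub_of_forall_mem_Icc (right_mem_Icc.2 zero_le_one) fun i hi =>
      le_antisymm (hunit i).2.2 hi.2 ▸ (hend i).2
  have one_sub_antitone : AntitoneOn (fun x : ℝ => 1 - x) (Icc 0 1) :=
    fun _ _ _ _ hxy => sub_le_sub_left hxy 1
  exact fuzzyNegation_iff_antitoneOn.2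
    ⟨antitoneOn_of_antitoneOn_Icc_of_eq_off one_sub_antitone hunit hanti hend
      fun x hx => (hNI x hx).2, h0.trans (sub_zero 1), h1.trans (sub_self 1)⟩

end IsOrdinalSum

/-- When intervals overlap, `IsOrdinalSum` requires the formulas of all intervals containing a point
to prescribe the same value there. -/
theorem ordinalSum_fuzzyNegation_iff_general {I : Type*} {a b : I → ℝ} {N : I → ℝ → ℝ}
    {NI : ℝ → ℝ} (hI : ∀ i, 0 ≤ a i ∧ a i < b i ∧ b i ≤ 1) (hNI : IsOrdinalSum a b N NI) :
    (∀ i, FuzzyNegation (N i)) ↔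
      (FuzzyNegation NI ∧ ∀ i, NI (a i) = 1 - a i ∧ NI (b i) = 1 - b i) := by
  have hunit (i : I) : a i ∈ Icc (0 : ℝ) 1 ∧ b i ∈ Icc (0 : ℝ) 1 := by
    obtain ⟨ha, hab, hb⟩ := hI i
    exact ⟨⟨ha, hab.le.trans hb⟩, ⟨ha.trans hab.le, hb⟩⟩
  rw [forall_congr' fun i => hNI.fuzzyNegation_summand_iff (hI i), forall_and]
  refine and_congr_left fun hend =>
    ⟨fun hanti => hNI.fuzzyNegation_of_antitoneOn_Icc hunit hanti hend, fun hfuzzy i => ?_⟩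
  exact (fuzzyNegation_iff_antitoneOn.1 hfuzzy).1.mono (Icc_subset_Icc (hunit i).1.1 (hunit i).2.2)

theorem ordinalSum_fuzzyNegation_iff {I : Type*} (a b : I → ℝ) (N : I → ℝ → ℝ) (NI : ℝ → ℝ)
    (hfam : GoodFamily a b)
    (hmaps : ∀ i, ∀ x ∈ Icc (0:ℝ) 1, N i x ∈ Icc (0:ℝ) 1)
    (hNI : IsOrdinalSum a b N NI) :
    (∀ i, FuzzyNegation (N i)) ↔
      (FuzzyNegation NI ∧ ∀ i, NI (a i) = 1 - a i ∧ NI (b i) = 1 - b i) :=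
  ordinalSum_fuzzyNegation_iff_general hfam.1 hNI
end

section
/- Let (]a_i,b_i[)_{i∈I} be a family of nonempty, pairwise disjoint open subintervals of [0,1] and (N_i)_{i∈I} a family of fuzzy negations. If every N_i is a strict fuzzy negation and, for each i ∈ I, there exists j ∈ I such that a_j = 1−b_i, b_j = 1−a_i, and N_j is the inverse of N_i (i.e., N_j(N_i(x)) = x and N_i(N_j(x)) = x for all x ∈ [0,1]), then the ordinal sum N_I of the summands (a_i,b_i,N_i)_{i∈I} is a strong fuzzy negation. -/
/-!
Call `c` a cut point if it lies in none of the open intervals `]a i, b i[`. At a cut point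
`NI c = 1 - c`, while `NI` sends `]a i, b i[` into the reflected interval `[1 - b i, 1 - a i]`;
hence `NI y ≤ 1 - c ≤ NI x` whenever `x ≤ c ≤ y`. The cut points `0` and `1` give the bounds and
boundary values of `NI`. Points `x ≤ y` lie in a common `[a i, b i]`, where `NI` is a rescaled
`N i`, or are separated by a cut point: `x` itself, or the right endpoint of the open interval
containing `x`. This gives monotonicity. Finally, if the family is closed under the reflection
`x ↦ 1 - x`, then so is the set of cut points, where `NI` is therefore involutive; on the other
points `NI` is undone by the rescaled inverse carried by the reflected interval.
-/

open Set

section RescaledNegation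

/-- The copy of `M : [0,1] → [0,1]` carried by the summand `(a, b, M)` of an ordinal sum, viewed as
a map from `[a, b]` to the reflected interval `[1 - b, 1 - a]`. It is meant for `a < b`;
for `a = b` the division is by zero and the map is the constant `1 - b`. -/
noncomputable def rescaledNegation (a b : ℝ) (M : ℝ → ℝ) (x : ℝ) : ℝ :=
  (1 - b) + (b - a) * M ((x - a) / (b - a))

variable {a b x : ℝ} {M M' : ℝ → ℝ}

lemma sub_div_sub_mem_Icc_zero_one (hx : x ∈ Icc a b) : (x - a) / (b - a) ∈ Icc (0 : ℝ) 1 :=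
  unitInterval.div_mem (sub_nonneg.2 hx.1) (sub_nonneg.2 (hx.1.trans hx.2))
    (sub_le_sub_right hx.2 a)

lemma mapsTo_rescaledNegation (hM : MapsTo M (Icc 0 1) (Icc 0 1)) :
    MapsTo (rescaledNegation a b M) (Icc a b) (Icc (1 - b) (1 - a)) := by
  intro x hx
  have hd : 0 ≤ b - a := sub_nonneg.2 (hx.1.trans hx.2)
  obtain ⟨h0, h1⟩ := hM (sub_div_sub_mem_Icc_zero_one hx)
  have hlower := mul_nonneg hd h0
  have hupper := mul_le_of_le_one_right hd h1
  constructor <;> simp only [rescaledNegation] <;> linarith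

lemma antitoneOn_rescaledNegation (hM : AntitoneOn M (Icc 0 1)) :
    AntitoneOn (rescaledNegation a b M) (Icc a b) := by
  intro x hx y hy hxy
  have hd : 0 ≤ b - a := sub_nonneg.2 (hx.1.trans hx.2)
  have hMxy : M ((y - a) / (b - a)) ≤ M ((x - a) / (b - a)) :=
    hM (sub_div_sub_mem_Icc_zero_one hx) (sub_div_sub_mem_Icc_zero_one hy) (by gcongr)
  simp only [rescaledNegation]
  gcongr

lemma rescaledNegation_left (h0 : M 0 = 1) : rescaledNegation a b M a = 1 - a := by
  simp [rescaledNegation, h0]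

lemma rescaledNegation_right (hab : a < b) (h1 : M 1 = 0) :
    rescaledNegation a b M b = 1 - b := by
  simp [rescaledNegation, div_self (sub_pos.2 hab).ne', h1]

lemma leftInvOn_rescaledNegation (hab : a < b) (hM : LeftInvOn M' M (Icc 0 1)) :
    LeftInvOn (rescaledNegation (1 - b) (1 - a) M') (rescaledNegation a b M) (Icc a b) := by
  intro x hx
  have hd : b - a ≠ 0 := (sub_pos.2 hab).ne'
  have hwidth : 1 - a - (1 - b) = b - a := by ring
  have hrescale :
      (rescaledNegation a b M x - (1 - b)) / (b - a) = M ((x - a) / (b - a)) := by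
    rw [rescaledNegation, add_sub_cancel_left, mul_div_cancel_left₀ _ hd]
  rw [rescaledNegation, hwidth, hrescale, hM (sub_div_sub_mem_Icc_zero_one hx),
    mul_div_cancel₀ _ hd]
  ring

end RescaledNegation

section CutPoint

variable {I : Type*} {a b : I → ℝ} {c x y : ℝ}

/-- A cut point of the family `(]a i, b i[)_{i ∈ I}`: a point lying in none of the open intervals.
Endpoints are allowed, so `x ≤ y` fail to share an interval only if a cut point lies in `[x, y]`. -/
def IsCutPoint (a b : I → ℝ) (c : ℝ) : Prop :=
  ∀ i, c ∉ Ioo (a i) (b i)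

lemma isCutPoint_or_exists_mem_Ioo (a b : I → ℝ) (x : ℝ) :
    IsCutPoint a b x ∨ ∃ i, x ∈ Ioo (a i) (b i) := by
  simpa only [IsCutPoint, ← not_exists] using (em (∃ i, x ∈ Ioo (a i) (b i))).symm

lemma IsCutPoint.one_sub (hrefl : ∀ i, ∃ j, a j = 1 - b i ∧ b j = 1 - a i)
    (hc : IsCutPoint a b c) : IsCutPoint a b (1 - c) := by
  intro i hi
  obtain ⟨j, haj, hbj⟩ := hrefl i
  exact hc j ⟨by linarith [hi.2], by linarith [hi.1]⟩

namespace GoodFamily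

lemma isCutPoint_zero (hfam : GoodFamily a b) : IsCutPoint a b 0 :=
  fun i hi ↦ hi.1.not_ge (hfam.1 i).1

lemma isCutPoint_one (hfam : GoodFamily a b) : IsCutPoint a b 1 :=
  fun i hi ↦ hi.2.not_ge (hfam.1 i).2.2

lemma isCutPoint_right (hfam : GoodFamily a b) (i : I) : IsCutPoint a b (b i) := by
  intro j hj
  have hij : i ≠ j := by
    rintro rfl
    exact hj.2.false
  have hdisj := Ioo_disjoint_Ioo.1 (hfam.2 i j hij)
  rw [min_eq_left hj.2.le] at hdisj
  exact hdisj.not_gt (max_lt (hfam.1 i).2.1 hj.1)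

lemma exists_mem_Icc_or_exists_isCutPoint (hfam : GoodFamily a b) (hxy : x ≤ y) :
    (∃ i, x ∈ Icc (a i) (b i) ∧ y ∈ Icc (a i) (b i)) ∨ ∃ c ∈ Icc x y, IsCutPoint a b c := by
  rcases isCutPoint_or_exists_mem_Ioo a b x with hx | ⟨i, hi⟩
  · exact .inr ⟨x, left_mem_Icc.2 hxy, hx⟩
  · rcases le_total y (b i) with hy | hy
    · exact .inl ⟨i, Ioo_subset_Icc_self hi, hi.1.le.trans hxy, hy⟩
    · exact .inr ⟨b i, ⟨hi.2.le, hy⟩, hfam.isCutPoint_right i⟩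

lemma Icc_subset_Icc_zero_one (hfam : GoodFamily a b) (i : I) :
    Icc (a i) (b i) ⊆ Icc 0 1 :=
  Icc_subset_Icc (hfam.1 i).1 (hfam.1 i).2.2

end GoodFamily

end CutPoint

namespace IsOrdinalSum

variable {I : Type*} {a b : I → ℝ} {N : I → ℝ → ℝ} {NI : ℝ → ℝ} {c x : ℝ}

lemma eqOn_rescaledNegation (hNI : IsOrdinalSum a b N NI) (hfam : GoodFamily a b) (i : I) :
    EqOn NI (rescaledNegation (a i) (b i) (N i)) (Icc (a i) (b i)) :=
  fun x hx ↦ (hNI x (hfam.Icc_subset_Icc_zero_one i hx)).1 i hx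

lemma mapsTo_Icc (hNI : IsOrdinalSum a b N NI) (hfam : GoodFamily a b) {i : I}
    (hN : MapsTo (N i) (Icc 0 1) (Icc 0 1)) :
    MapsTo NI (Icc (a i) (b i)) (Icc (1 - b i) (1 - a i)) :=
  (mapsTo_rescaledNegation hN).congr (hNI.eqOn_rescaledNegation hfam i).symm

lemma apply_of_isCutPoint (hNI : IsOrdinalSum a b N NI) (hfam : GoodFamily a b)
    (hneg : ∀ i, FuzzyNegation (N i)) (hc01 : c ∈ Icc 0 1) (hc : IsCutPoint a b c) :
    NI c = 1 - c := by
  by_cases hmem : ∃ i, c ∈ Icc (a i) (b i)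
  · obtain ⟨i, hi⟩ := hmem
    rw [hNI.eqOn_rescaledNegation hfam i hi]
    rcases eq_endpoints_or_mem_Ioo_of_mem_Icc hi with rfl | rfl | hIoo
    · exact rescaledNegation_left (hneg i).2.1
    · exact rescaledNegation_right (hfam.1 i).2.1 (hneg i).2.2.1
    · exact absurd hIoo (hc i)
  · exact (hNI c hc01).2 (not_exists.1 hmem)

lemma one_sub_le_of_le_isCutPoint (hNI : IsOrdinalSum a b N NI) (hfam : GoodFamily a b)
    (hneg : ∀ i, FuzzyNegation (N i)) (hx : x ∈ Icc 0 1) (hc : IsCutPoint a b c)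
    (hxc : x ≤ c) : 1 - c ≤ NI x := by
  rcases isCutPoint_or_exists_mem_Ioo a b x with hcut | ⟨i, hi⟩
  · rw [hNI.apply_of_isCutPoint hfam hneg hx hcut]
    exact sub_le_sub_left hxc 1
  · have hbc : b i ≤ c := not_lt.1 fun h ↦ hc i ⟨hi.1.trans_le hxc, h⟩
    calc 1 - c ≤ 1 - b i := sub_le_sub_left hbc 1
      _ ≤ NI x := (hNI.mapsTo_Icc hfam (hneg i).1 (Ioo_subset_Icc_self hi)).1

lemma le_one_sub_of_isCutPoint_le (hNI : IsOrdinalSum a b N NI) (hfam : GoodFamily a b)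
    (hneg : ∀ i, FuzzyNegation (N i)) (hx : x ∈ Icc 0 1) (hc : IsCutPoint a b c)
    (hcx : c ≤ x) : NI x ≤ 1 - c := by
  rcases isCutPoint_or_exists_mem_Ioo a b x with hcut | ⟨i, hi⟩
  · rw [hNI.apply_of_isCutPoint hfam hneg hx hcut]
    exact sub_le_sub_left hcx 1
  · have hca : c ≤ a i := not_lt.1 fun h ↦ hc i ⟨h, hcx.trans_lt hi.2⟩
    calc NI x ≤ 1 - a i := (hNI.mapsTo_Icc hfam (hneg i).1 (Ioo_subset_Icc_self hi)).2
      _ ≤ 1 - c := sub_le_sub_left hca 1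

lemma mapsTo_Icc_zero_one (hNI : IsOrdinalSum a b N NI) (hfam : GoodFamily a b)
    (hneg : ∀ i, FuzzyNegation (N i)) : MapsTo NI (Icc 0 1) (Icc 0 1) := fun x hx ↦
  ⟨by simpa using hNI.one_sub_le_of_le_isCutPoint hfam hneg hx hfam.isCutPoint_one hx.2,
    by simpa using hNI.le_one_sub_of_isCutPoint_le hfam hneg hx hfam.isCutPoint_zero hx.1⟩

lemma antitoneOn (hNI : IsOrdinalSum a b N NI) (hfam : GoodFamily a b)
    (hneg : ∀ i, FuzzyNegation (N i)) : AntitoneOn NI (Icc 0 1) := by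
  intro x hx y hy hxy
  rcases hfam.exists_mem_Icc_or_exists_isCutPoint hxy with ⟨i, hxi, hyi⟩ | ⟨c, hcxy, hc⟩
  · have hanti : AntitoneOn (N i) (Icc 0 1) := fun s hs t ht ↦ (hneg i).2.2.2 s hs t ht
    rw [hNI.eqOn_rescaledNegation hfam i hxi, hNI.eqOn_rescaledNegation hfam i hyi]
    exact antitoneOn_rescaledNegation hanti hxi hyi hxy
  · calc NI y ≤ 1 - c := hNI.le_one_sub_of_isCutPoint_le hfam hneg hy hc hcxy.2
      _ ≤ NI x := hNI.one_sub_le_of_le_isCutPoint hfam hneg hx hc hcxy.1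

lemma fuzzyNegation (hNI : IsOrdinalSum a b N NI) (hfam : GoodFamily a b)
    (hneg : ∀ i, FuzzyNegation (N i)) : FuzzyNegation NI := by
  refine ⟨hNI.mapsTo_Icc_zero_one hfam hneg, ?_, ?_,
    fun x hx y hy ↦ hNI.antitoneOn hfam hneg hx hy⟩
  · simpa using
      hNI.apply_of_isCutPoint hfam hneg (left_mem_Icc.2 zero_le_one) hfam.isCutPoint_zero
  · simpa using
      hNI.apply_of_isCutPoint hfam hneg (right_mem_Icc.2 zero_le_one) hfam.isCutPoint_one

lemma leftInvOn_of_reflected (hNI : IsOrdinalSum a b N NI) (hfam : GoodFamily a b) {i j : I}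
    (hN : MapsTo (N i) (Icc 0 1) (Icc 0 1)) (haj : a j = 1 - b i) (hbj : b j = 1 - a i)
    (hinv : LeftInvOn (N j) (N i) (Icc 0 1)) : LeftInvOn NI NI (Icc (a i) (b i)) := by
  intro x hx
  have hmem : NI x ∈ Icc (a j) (b j) := by
    rw [haj, hbj]
    exact hNI.mapsTo_Icc hfam hN hx
  rw [hNI.eqOn_rescaledNegation hfam j hmem, hNI.eqOn_rescaledNegation hfam i hx, haj, hbj]
  exact leftInvOn_rescaledNegation (hfam.1 i).2.1 hinv hx

lemma leftInvOn_self (hNI : IsOrdinalSum a b N NI) (hfam : GoodFamily a b)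
    (hneg : ∀ i, FuzzyNegation (N i))
    (hinv : ∀ i, ∃ j, a j = 1 - b i ∧ b j = 1 - a i ∧ LeftInvOn (N j) (N i) (Icc 0 1)) :
    LeftInvOn NI NI (Icc 0 1) := by
  intro x hx
  rcases isCutPoint_or_exists_mem_Ioo a b x with hcut | ⟨i, hi⟩
  · have hcut' : IsCutPoint a b (1 - x) :=
      hcut.one_sub fun i ↦ (hinv i).imp fun _ h ↦ ⟨h.1, h.2.1⟩
    rw [hNI.apply_of_isCutPoint hfam hneg hx hcut,
      hNI.apply_of_isCutPoint hfam hneg (Icc.one_sub_mem hx) hcut', sub_sub_cancel]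
  · obtain ⟨j, haj, hbj, hj⟩ := hinv i
    exact hNI.leftInvOn_of_reflected hfam (hneg i).1 haj hbj hj (Ioo_subset_Icc_self hi)

end IsOrdinalSum

theorem ordinalSum_strong_of_strict_inverses {I : Type*} (a b : I → ℝ)
    (N : I → ℝ → ℝ) (NI : ℝ → ℝ)
    (hfam : GoodFamily a b) (hneg : ∀ i, FuzzyNegation (N i))
    (hNI : IsOrdinalSum a b N NI)
    (hstrict : ∀ i, ContinuousOn (N i) (Icc (0:ℝ) 1) ∧ StrictAntiOn (N i) (Icc (0:ℝ) 1))
    (hinv : ∀ i, ∃ j, a j = 1 - b i ∧ b j = 1 - a i ∧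
      ∀ x ∈ Icc (0:ℝ) 1, N j (N i x) = x ∧ N i (N j x) = x) :
    FuzzyNegation NI ∧ ∀ x ∈ Icc (0:ℝ) 1, NI (NI x) = x := by
  have hleft (i : I) :
      ∃ j, a j = 1 - b i ∧ b j = 1 - a i ∧ LeftInvOn (N j) (N i) (Icc 0 1) := by
    obtain ⟨j, haj, hbj, hj⟩ := hinv i
    exact ⟨j, haj, hbj, fun x hx ↦ (hj x hx).1⟩
  exact ⟨hNI.fuzzyNegation hfam hneg, hNI.leftInvOn_self hfam hneg hleft⟩
end
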